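/- For every integer k ≥ 2, with d = 4k there exist a d-quasi-copula Q : [0,1]^d → [0,1] and a d-box B ⊆ [0,1]^d such that V_Q(B) < −(d−1)²/(2d−1). Consequently, the conjecture that the minimal Q-volume over all d-quasi-copulas and all d-boxes equals −(d−1)²/(2d−1) fails for every dimension d divisible by 4 with d ≥ 8. -/

import Mathlib

/-!
The box is `[1/3, 2/3]^d` with `d = 4k`. Pointwise maxima and minima preserve the inequality
`f u ≤ f v + ∑ (u_i - v_i)⁺`, which says that `f` is at once monotone and `1`-Lipschitz for `ℓ¹`.
Hence for every such `f` the function `max (max 0 G) (min H f)` is a quasi-copula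
(`isQuasiCopula_clamp`): the Fréchet–Hoeffding bounds `max 0 G` and `H` already force the boundary
conditions. With
`f u = max_{|S| = 2k+1} (1/3 - ∑_{i ∈ S} (2/3 - u_i)⁺)`
this quasi-copula takes the value `1/3` at the vertices of the box with at least `2k + 1` upper
coordinates, and `0` at the others (`clamp_vertex`). Here `G ≤ 0` on the whole box and `H ≥ 1/3`,
so the Fréchet–Hoeffding bounds do not interfere. The volume is therefore
`(1/3) ∑_{j > 2k} (-1)^(d-j) C(d, j)`, a truncated alternating binomial sum equal to
`-(1/3) C(4k-1, 2k-1)`. Finally `C(4k-1, 2k-1) ≥ C(4k-1, 2) = (4k-1)(2k-1) ≥ 3(4k-1)` for `k ≥ 2`,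
and `3(d-1)^2/(2d-1) < 3(d-1)`.
-/

namespace QC

/-- A point lies in the unit cube `[0,1]^d`. -/
def InCube {d : ℕ} (u : Fin d → ℝ) : Prop := ∀ i, u i ∈ Set.Icc (0:ℝ) 1

/-- A `d`-quasi-copula: boundary conditions, monotonicity in each variable,
and the `ℓ¹`-Lipschitz condition, on the unit cube. -/
structure IsQuasiCopula (d : ℕ) (Q : (Fin d → ℝ) → ℝ) : Prop where
  mem : ∀ u, InCube u → Q u ∈ Set.Icc (0:ℝ) 1
  bc0 : ∀ u, InCube u → (∃ i, u i = 0) → Q u = 0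
  bc1 : ∀ (i : Fin d), ∀ t ∈ Set.Icc (0:ℝ) 1,
      Q (fun j => if j = i then t else 1) = t
  mono : ∀ (i : Fin d) (u v : Fin d → ℝ), InCube u → InCube v →
      (∀ j, j ≠ i → u j = v j) → u i ≤ v i → Q u ≤ Q v
  lip : ∀ u v, InCube u → InCube v → |Q u - Q v| ≤ ∑ i, |u i - v i|

/-- `‖I‖₁` for a multi-index `I ∈ {0,1}^d`. -/
def normOne {d : ℕ} (I : Fin d → Bool) : ℕ :=
  (Finset.univ.filter fun k => I k = true).card

/-- The vertex `x_I` of the box `Π [a_i, b_i]`. -/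
def vertex {d : ℕ} (a b : Fin d → ℝ) (I : Fin d → Bool) : Fin d → ℝ :=
  fun k => if I k then b k else a k

/-- The `Q`-volume of the box `Π [a_i, b_i]`. -/
def boxVolume {d : ℕ} (Q : (Fin d → ℝ) → ℝ) (a b : Fin d → ℝ) : ℝ :=
  ∑ I : Fin d → Bool, (-1 : ℝ) ^ (d - normOne I) * Q (vertex a b I)

/-- `Π [a_i, b_i]` is a `d`-box inside `[0,1]^d` with `a_i < b_i`. -/
def IsBox {d : ℕ} (a b : Fin d → ℝ) : Prop :=
  ∀ i, 0 ≤ a i ∧ a i < b i ∧ b i ≤ 1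

/-- `G_d(x) = Σ x_i - d + 1`. -/
def Gd {d : ℕ} (x : Fin d → ℝ) : ℝ := (∑ i, x i) - d + 1

/-- `H_d(x) = min { x_1, …, x_d }`. -/
noncomputable def Hd {d : ℕ} (x : Fin d → ℝ) : ℝ := ⨅ i, x i

/-- `I ∼_ℓ J` for multi-indices in `{0,1}^d`: `J - I = e^(ℓ)`. -/
def Adj2 {d : ℕ} (I J : Fin d → Bool) (ℓ : Fin d) : Prop :=
  I ℓ = false ∧ J ℓ = true ∧ ∀ k, k ≠ ℓ → I k = J k

/-- The grid point `x_I ∈ Π {a_i, 1}` for `I ∈ {0,1}^d`. -/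
def xI2 {d : ℕ} (a : Fin d → ℝ) (I : Fin d → Bool) : Fin d → ℝ :=
  fun k => if I k then 1 else a k

/-- The grid point `x_I ∈ Π {a_i, b_i, 1}` for `I ∈ {0,1,2}^d`. -/
def xI3 {d : ℕ} (a b : Fin d → ℝ) (I : Fin d → Fin 3) : Fin d → ℝ :=
  fun k => if I k = 0 then a k else if I k = 1 then b k else 1

/-- `I ∼_ℓ J` for multi-indices in `{0,1,2}^d`: `J - I = e^(ℓ)`. -/
def Adj3 {d : ℕ} (I J : Fin d → Fin 3) (ℓ : Fin d) : Prop :=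
  ((J ℓ : ℕ) = (I ℓ : ℕ) + 1) ∧ ∀ k, k ≠ ℓ → I k = J k

/-- The extended domain `D^ext = Π {a_i,1} ∪ ⋃ L_i`, where
`L_i = { x ∈ [0,1]^d : x_i = 0 }`. -/
def Dext2 {d : ℕ} (a : Fin d → ℝ) (x : Fin d → ℝ) : Prop :=
  (∃ I : Fin d → Bool, x = xI2 a I) ∨ (InCube x ∧ ∃ i, x i = 0)

/-- The extended domain `D^ext = Π {a_i,b_i,1} ∪ ⋃ L_i`. -/
def Dext3 {d : ℕ} (a b : Fin d → ℝ) (x : Fin d → ℝ) : Prop :=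
  (∃ I : Fin d → Fin 3, x = xI3 a b I) ∨ (InCube x ∧ ∃ i, x i = 0)

/-- Feasibility for the linear programs (3.1)/(3.4) on the `2^d` grid. -/
def Feasible2 {d : ℕ} (a b : Fin d → ℝ) (q : (Fin d → Bool) → ℝ) : Prop :=
  (∀ i, 0 ≤ a i ∧ a i < b i ∧ b i ≤ 1) ∧
  (∀ (ℓ : Fin d) (I J : Fin d → Bool), Adj2 I J ℓ →
      0 ≤ q J - q I ∧ q J - q I ≤ b ℓ - a ℓ) ∧
  (∀ I, max 0 (Gd (vertex a b I)) ≤ q I ∧ q I ≤ Hd (vertex a b I))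

/-- The objective `V(q) = Σ_{I ∈ {0,1}^d} (-1)^(d-‖I‖₁) q_I`. -/
def Vq {d : ℕ} (q : (Fin d → Bool) → ℝ) : ℝ :=
  ∑ I : Fin d → Bool, (-1 : ℝ) ^ (d - normOne I) * q I

/-- Feasibility for the linear program (3.3) on the `3^d` grid. -/
def Feasible3 {d : ℕ} (a b : Fin d → ℝ) (q : (Fin d → Fin 3) → ℝ) : Prop :=
  (∀ i, 0 ≤ a i ∧ a i < b i ∧ b i ≤ 1) ∧
  (∀ (ℓ : Fin d) (I J : Fin d → Fin 3), Adj3 I J ℓ → J ℓ = 1 →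
      0 ≤ q J - q I ∧ q J - q I ≤ b ℓ - a ℓ) ∧
  (∀ (ℓ : Fin d) (I J : Fin d → Fin 3), Adj3 I J ℓ → J ℓ = 2 →
      0 ≤ q J - q I ∧ q J - q I ≤ 1 - b ℓ) ∧
  (∀ I, max 0 (Gd (xI3 a b I)) ≤ q I ∧ q I ≤ Hd (xI3 a b I))

/-- The objective `V(q)` for the `3^d` grid: the sum runs over multi-indices
with entries in `{0,1}` only. -/
def Vq3 {d : ℕ} (q : (Fin d → Fin 3) → ℝ) : ℝ :=
  ∑ I : Fin d → Bool, (-1 : ℝ) ^ (d - normOne I) * q (fun k => if I k then 1 else 0)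

/-- A point of a box all of whose coordinates are endpoints. -/
def IsVertexPoint {d : ℕ} (a b : Fin d → ℝ) (u : Fin d → ℝ) : Prop :=
  ∀ i, u i = a i ∨ u i = b i

/-- A point lies in the box `Π [a_i, b_i]`. -/
def InBox {d : ℕ} (a b : Fin d → ℝ) (u : Fin d → ℝ) : Prop :=
  ∀ i, u i ∈ Set.Icc (a i) (b i)

/-- `F` is multilinear on the box `Π [a_i, b_i]`: affine separately in each
variable (on the box). -/
def MultilinearOnBox {d : ℕ} (a b : Fin d → ℝ) (F : (Fin d → ℝ) → ℝ) : Prop :=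
  ∀ (i : Fin d) (u : Fin d → ℝ), InBox a b u →
    ∃ c e : ℝ, ∀ t ∈ Set.Icc (a i) (b i), F (Function.update u i t) = c * t + e

/-- `f u - f v ≤ ∑ (u_i - v_i)⁺` for all `u`, `v`. Equivalently, `f` is nondecreasing in every
variable and `1`-Lipschitz for the `ℓ¹` distance. -/
def MonoLip {d : ℕ} (f : (Fin d → ℝ) → ℝ) : Prop :=
  ∀ u v, f u ≤ f v + ∑ i, max (u i - v i) 0

theorem sum_pos_part_nonneg {d : ℕ} (u v : Fin d → ℝ) : 0 ≤ ∑ i, max (u i - v i) 0 :=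
  Finset.sum_nonneg fun _ _ => le_max_right _ _

theorem MonoLip.max {d : ℕ} {f g : (Fin d → ℝ) → ℝ} (hf : MonoLip f) (hg : MonoLip g) :
    MonoLip fun u => max (f u) (g u) := fun u v =>
  max_le ((hf u v).trans (by gcongr; exact le_max_left _ _))
    ((hg u v).trans (by gcongr; exact le_max_right _ _))

theorem MonoLip.min {d : ℕ} {f g : (Fin d → ℝ) → ℝ} (hf : MonoLip f) (hg : MonoLip g) :
    MonoLip fun u => min (f u) (g u) := fun u v => by
  rw [← min_add_add_right]
  exact min_le_min (hf u v) (hg u v)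

theorem monoLip_zero {d : ℕ} : MonoLip fun _ : Fin d → ℝ => 0 := fun u v => by
  simpa using sum_pos_part_nonneg u v

theorem monoLip_Gd {d : ℕ} : MonoLip (Gd (d := d)) := fun u v => by
  have h : ∑ i, (u i - v i) ≤ ∑ i, Max.max (u i - v i) 0 :=
    Finset.sum_le_sum fun _ _ => le_max_left _ _
  rw [Finset.sum_sub_distrib] at h
  unfold Gd
  linarith

theorem Hd_le {d : ℕ} (u : Fin d → ℝ) (i : Fin d) : Hd u ≤ u i :=
  ciInf_le (Set.finite_range u).bddBelow i

theorem monoLip_Hd {d : ℕ} [Nonempty (Fin d)] : MonoLip (Hd (d := d)) := fun u v => by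
  rw [← sub_le_iff_le_add]
  refine le_ciInf fun i => ?_
  have h1 := Hd_le u i
  have h2 : Max.max (u i - v i) 0 ≤ ∑ i, Max.max (u i - v i) 0 :=
    Finset.single_le_sum (f := fun i => Max.max (u i - v i) 0)
      (fun _ _ => le_max_right _ _) (Finset.mem_univ i)
  have h3 := le_max_left (u i - v i) 0
  linarith

/-- Clamping a function between the Fréchet–Hoeffding bounds `max 0 G` and `H`. -/
noncomputable def clamp {d : ℕ} (f : (Fin d → ℝ) → ℝ) (u : Fin d → ℝ) : ℝ :=
  max (max 0 (Gd u)) (min (Hd u) (f u))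

theorem Gd_le_coord {d : ℕ} {u : Fin d → ℝ} (hu : InCube u) (i : Fin d) : Gd u ≤ u i := by
  have h : ∑ j, (1 - u j) ≥ 1 - u i :=
    Finset.single_le_sum (f := fun j => 1 - u j)
      (fun j _ => sub_nonneg.2 (hu j).2) (Finset.mem_univ i)
  rw [Finset.sum_sub_distrib] at h
  simp only [Finset.sum_const, Finset.card_univ, Fintype.card_fin, nsmul_eq_mul, mul_one] at h
  unfold Gd
  linarith

theorem clamp_le_coord {d : ℕ} (f : (Fin d → ℝ) → ℝ) {u : Fin d → ℝ} (hu : InCube u)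
    (i : Fin d) : clamp f u ≤ u i :=
  max_le (max_le (hu i).1 (Gd_le_coord hu i)) ((min_le_left _ _).trans (Hd_le u i))

theorem clamp_nonneg {d : ℕ} (f : (Fin d → ℝ) → ℝ) (u : Fin d → ℝ) : 0 ≤ clamp f u :=
  (le_max_left _ _).trans (le_max_left _ _)

theorem isQuasiCopula_clamp {d : ℕ} [Nonempty (Fin d)] {f : (Fin d → ℝ) → ℝ} (hf : MonoLip f) :
    IsQuasiCopula d (clamp f) := by
  have hQ : MonoLip (clamp f) := (monoLip_zero.max monoLip_Gd).max (monoLip_Hd.min hf)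
  constructor
  · intro u hu
    obtain ⟨i⟩ := ‹Nonempty (Fin d)›
    exact ⟨clamp_nonneg f u, (clamp_le_coord f hu i).trans (hu i).2⟩
  · rintro u hu ⟨i, hi⟩
    exact le_antisymm (hi ▸ clamp_le_coord f hu i) (clamp_nonneg f u)
  · intro i t ht
    have hc : InCube fun j => if j = i then t else 1 := fun j => by
      dsimp only
      split_ifs
      exacts [ht, ⟨zero_le_one, le_rfl⟩]
    refine le_antisymm (by simpa using clamp_le_coord f hc i) ?_
    have hG : Gd (fun j => if j = i then t else 1) = t := by
      have h : ∀ j, (if j = i then t else 1) = 1 + if j = i then t - 1 else 0 := fun j => by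
        split_ifs <;> ring
      simp only [Gd, h, Finset.sum_add_distrib, Finset.sum_ite_eq', Finset.mem_univ, if_true,
        Finset.sum_const, Finset.card_univ, Fintype.card_fin, nsmul_eq_mul, mul_one]
      ring
    calc t = Gd (fun j => if j = i then t else 1) := hG.symm
      _ ≤ _ := (le_max_right _ _).trans (le_max_left _ _)
  · intro i u v _ _ h hi
    have h0 : ∑ j, max (u j - v j) 0 = 0 := Finset.sum_eq_zero fun j _ => by
      rcases eq_or_ne j i with rfl | hj
      · exact max_eq_right (sub_nonpos.2 hi)
      · simp [h j hj]
    simpa [h0] using hQ u v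
  · intro u v _ _
    have key : ∀ u v : Fin d → ℝ, clamp f u - clamp f v ≤ ∑ i, |u i - v i| := fun u v => by
      have h : ∑ i, max (u i - v i) 0 ≤ ∑ i, |u i - v i| :=
        Finset.sum_le_sum fun i _ => max_le (le_abs_self _) (abs_nonneg _)
      linarith [hQ u v]
    refine abs_sub_le_iff.2 ⟨key u v, ?_⟩
    simpa only [abs_sub_comm] using key v u

theorem powersetCard_univ_nonempty {d m : ℕ} (h : m ≤ d) :
    (Finset.powersetCard m (Finset.univ : Finset (Fin d))).Nonempty :=
  Finset.powersetCard_nonempty.2 (by simpa using h)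

/-- `max_{|S| = m} (1/3 - ∑_{i ∈ S} (2/3 - u_i)⁺)`: a function equal to `1/3` as soon as `m`
coordinates are at least `2/3`; otherwise `1/3` minus the `ℓ¹` cost of raising `m` coordinates to
`2/3`. -/
noncomputable def level {d m : ℕ} (h : m ≤ d) (u : Fin d → ℝ) : ℝ :=
  (Finset.powersetCard m Finset.univ).sup' (powersetCard_univ_nonempty h)
    fun S => 1 / 3 - ∑ i ∈ S, max (2 / 3 - u i) 0

theorem monoLip_level {d m : ℕ} (h : m ≤ d) : MonoLip (level h) := fun u v => by
  refine Finset.sup'_le _ _ fun S hS => ?_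
  have h1 : 1 / 3 - ∑ i ∈ S, max (2 / 3 - v i) 0 ≤ level h v :=
    Finset.le_sup' (fun S => 1 / 3 - ∑ i ∈ S, max (2 / 3 - v i) 0) hS
  have h2 : ∑ i ∈ S, max (2 / 3 - v i) 0
      ≤ ∑ i ∈ S, (max (2 / 3 - u i) 0 + max (u i - v i) 0) := by
    refine Finset.sum_le_sum fun i _ => max_le ?_ ?_
    · linarith [le_max_left (2 / 3 - u i) 0, le_max_left (u i - v i) 0]
    · linarith [le_max_right (2 / 3 - u i) 0, le_max_right (u i - v i) 0]
  rw [Finset.sum_add_distrib] at h2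
  have h3 : ∑ i ∈ S, max (u i - v i) 0 ≤ ∑ i, max (u i - v i) 0 :=
    Finset.sum_le_sum_of_subset_of_nonneg (Finset.subset_univ S) fun _ _ _ => le_max_right _ _
  linarith

theorem level_vertex_of_le {d m : ℕ} (h : m ≤ d) (I : Fin d → Bool) (hI : m ≤ normOne I) :
    level h (vertex (fun _ => 1 / 3) (fun _ => 2 / 3) I) = 1 / 3 := by
  apply le_antisymm
  · exact Finset.sup'_le _ _ fun S _ =>
      sub_le_self _ (Finset.sum_nonneg fun _ _ => le_max_right _ _)
  · obtain ⟨S, hS, hc⟩ := Finset.exists_subset_card_eq hI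
    refine le_trans ?_ (Finset.le_sup' _
      (Finset.mem_powersetCard.2 ⟨Finset.subset_univ S, hc⟩))
    rw [Finset.sum_eq_zero fun i hi => ?_, sub_zero]
    have := (Finset.mem_filter.1 (hS hi)).2
    simp [vertex, this]

theorem level_vertex_of_lt {d m : ℕ} (h : m ≤ d) (I : Fin d → Bool) (hI : normOne I < m) :
    level h (vertex (fun _ => 1 / 3) (fun _ => 2 / 3) I) ≤ 0 := by
  refine Finset.sup'_le _ _ fun S hS => ?_
  -- A set of `m` indices must contain a lower coordinate, where the penalty is `1/3`.
  obtain ⟨i, hi, hn⟩ : ∃ i ∈ S, i ∉ Finset.univ.filter fun k => I k = true :=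
    Finset.exists_mem_notMem_of_card_lt_card (by
      rw [(Finset.mem_powersetCard.1 hS).2]; exact hI)
  have hb : I i = false := by simpa using hn
  have h1 := Finset.single_le_sum
    (f := fun i => max (2 / 3 - vertex (fun _ => 1 / 3) (fun _ => (2 / 3 : ℝ)) I i) 0)
    (fun _ _ => le_max_right _ _) hi
  have h2 := le_max_left (2 / 3 - vertex (fun _ => 1 / 3) (fun _ => (2 / 3 : ℝ)) I i) 0
  have h3 : vertex (fun _ => 1 / 3) (fun _ => (2 / 3 : ℝ)) I i = 1 / 3 := by simp [vertex, hb]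
  rw [h3] at h2
  rw [h3] at h1
  linarith

theorem clamp_vertex {d m : ℕ} (hd : 3 ≤ d) (h : m ≤ d) (I : Fin d → Bool) :
    clamp (level h) (vertex (fun _ => 1 / 3) (fun _ => 2 / 3) I)
      = if m ≤ normOne I then 1 / 3 else 0 := by
  have : Nonempty (Fin d) := ⟨⟨0, by omega⟩⟩
  set x : Fin d → ℝ := vertex (fun _ => 1 / 3) (fun _ => 2 / 3) I with hx
  have hG : Gd x ≤ 0 := by
    have hs : ∑ i, x i ≤ ∑ _i : Fin d, (2 / 3 : ℝ) := Finset.sum_le_sum fun i _ => by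
      simp only [hx, vertex]; split_ifs <;> norm_num
    have hd' : (3 : ℝ) ≤ d := by exact_mod_cast hd
    simp only [Finset.sum_const, Finset.card_univ, Fintype.card_fin, nsmul_eq_mul] at hs
    unfold Gd
    linarith
  have hH : 1 / 3 ≤ Hd x := le_ciInf fun i => by
    simp only [hx, vertex]; split_ifs <;> norm_num
  unfold clamp
  rw [max_eq_left hG]
  split_ifs with hI
  · rw [level_vertex_of_le h I hI, min_eq_right hH]
    norm_num
  · exact max_eq_left ((min_le_right _ _).trans (level_vertex_of_lt h I (not_le.1 hI)))

theorem sum_normOne {d : ℕ} (g : ℕ → ℝ) :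
    ∑ I : Fin d → Bool, g (normOne I) = ∑ j ∈ Finset.range (d + 1), (d.choose j : ℝ) * g j := by
  have h : ∑ I : Fin d → Bool, g (normOne I)
      = ∑ s ∈ (Finset.univ : Finset (Fin d)).powerset, g s.card := by
    refine Finset.sum_bij' (fun I _ => Finset.univ.filter fun k => I k = true)
      (fun s _ k => decide (k ∈ s)) ?_ ?_ ?_ ?_ ?_
    · simp
    · simp
    · intro I _; ext k; simp
    · intro s _; ext k; simp
    · intro I _; rfl
  rw [h, Finset.sum_powerset_apply_card]
  simp

/-- The alternating sum over the upper levels, reduced by the symmetry `j ↦ d - j` to a partial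
alternating sum of binomial coefficients. -/
theorem sum_upper {k : ℕ} (hk : 1 ≤ k) :
    ∑ j ∈ Finset.range (4 * k + 1), ((4 * k).choose j : ℝ) *
      ((-1) ^ (4 * k - j) * if 2 * k + 1 ≤ j then 1 / 3 else 0)
      = -((4 * k - 1).choose (2 * k - 1) / 3 : ℝ) := by
  rw [← Finset.sum_flip]
  have hsub : Finset.range (2 * k - 1 + 1) ⊆ Finset.range (4 * k + 1) :=
    Finset.range_subset_range.2 (by omega)
  rw [← Finset.sum_subset hsub]
  · have key := @Int.alternating_sum_range_choose_eq_choose (4 * k - 1) (2 * k - 1)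
    rw [show 4 * k - 1 + 1 = 4 * k by omega, Odd.neg_one_pow ⟨k - 1, by omega⟩] at key
    have key' := congrArg (fun z : ℤ => (z : ℝ) / 3) key
    push_cast at key'
    rw [Finset.sum_div] at key'
    rw [neg_one_mul, neg_div] at key'
    rw [← key']
    refine Finset.sum_congr rfl fun j hj => ?_
    have hj' := Finset.mem_range.1 hj
    rw [Nat.choose_symm (by omega), if_pos (by omega), show 4 * k - (4 * k - j) = j by omega]
    ring
  · intro j hj hj'
    rw [Finset.mem_range] at hj hj'
    rw [if_neg (by omega)]
    simp

theorem choose_lower_bound {k : ℕ} (hk : 2 ≤ k) :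
    3 * (4 * (k : ℝ) - 1) ≤ ((4 * k - 1).choose (2 * k - 1) : ℝ) := by
  have h1 := Nat.choose_le_middle 2 (4 * k - 1)
  rw [show (4 * k - 1) / 2 = 2 * k - 1 by omega] at h1
  have h2 : ((4 * k - 1).choose 2 : ℝ) ≤ (4 * k - 1).choose (2 * k - 1) := by exact_mod_cast h1
  rw [Nat.cast_choose_two, Nat.cast_sub (by omega)] at h2
  push_cast at h2
  have hk' : (2 : ℝ) ≤ k := by exact_mod_cast hk
  nlinarith

/-- for every `d = 4k` with `k ≥ 2` there is a `d`-quasi-copula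
and a `d`-box whose volume is below `-(d-1)^2/(2d-1)`; hence the conjectured
minimal value `-(d-1)^2/(2d-1)` is false in these dimensions. -/
theorem conjecture_false_dim4k
    (k : ℕ) (hk : 2 ≤ k) :
    (∃ (Q : (Fin (4 * k) → ℝ) → ℝ) (a b : Fin (4 * k) → ℝ),
        IsQuasiCopula (4 * k) Q ∧ IsBox a b ∧
        boxVolume Q a b < -(((4 * k : ℝ) - 1)^2 / (2 * (4 * k : ℝ) - 1))) ∧
    ¬ IsLeast {v : ℝ | ∃ (Q : (Fin (4 * k) → ℝ) → ℝ) (a b : Fin (4 * k) → ℝ),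
          IsQuasiCopula (4 * k) Q ∧ IsBox a b ∧ boxVolume Q a b = v}
        (-(((4 * k : ℝ) - 1)^2 / (2 * (4 * k : ℝ) - 1))) := by
  have hex : ∃ (Q : (Fin (4 * k) → ℝ) → ℝ) (a b : Fin (4 * k) → ℝ),
      IsQuasiCopula (4 * k) Q ∧ IsBox a b ∧
      boxVolume Q a b < -(((4 * k : ℝ) - 1)^2 / (2 * (4 * k : ℝ) - 1)) := by
    have : Nonempty (Fin (4 * k)) := ⟨⟨0, by omega⟩⟩
    have hm : 2 * k + 1 ≤ 4 * k := by omega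
    refine ⟨clamp (level hm), fun _ => 1 / 3, fun _ => 2 / 3,
      isQuasiCopula_clamp (monoLip_level hm), fun i => by norm_num, ?_⟩
    have hV : boxVolume (clamp (level hm)) (fun _ => 1 / 3) (fun _ => 2 / 3)
        = -((4 * k - 1).choose (2 * k - 1) / 3 : ℝ) := by
      rw [← sum_upper (by omega : 1 ≤ k), ← sum_normOne (d := 4 * k)
        fun j => (-1) ^ (4 * k - j) * if 2 * k + 1 ≤ j then 1 / 3 else 0]
      exact Finset.sum_congr rfl fun I _ => by rw [clamp_vertex (by omega) hm]
    rw [hV, neg_lt_neg_iff]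
    have hk' : (2 : ℝ) ≤ k := by exact_mod_cast hk
    have hC := choose_lower_bound hk
    rw [div_lt_iff₀ (by linarith)]
    nlinarith
  refine ⟨hex, fun hleast => ?_⟩
  obtain ⟨Q, a, b, hQ, hB, hlt⟩ := hex
  exact absurd (hleast.2 ⟨Q, a, b, hQ, hB, rfl⟩) (not_le.2 hlt)

end QC
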